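/- Let n ≥ 1 and let E be a real normed vector space. Let χ : ℝ × E → Matrix (Fin n) (Fin n) ℝ be twice continuously differentiable with χ(t,x) invertible for all (t,x), and let γ₀ : E → (E →L[ℝ] Matrix (Fin n) (Fin n) ℝ) be any matrix-valued one-form. Define ν(t,x) := (∂_tχ(t,x)) * χ(t,x)⁻¹ and γ(t,x)(w) := χ(t,x) * (γ₀(x) w) * χ(t,x)⁻¹ − (d_xχ(t,x) w) * χ(t,x)⁻¹ (i.e. γ(t) = θ_{χ(t)⁻¹}(γ₀) = χγ₀χ⁻¹ + χ d(χ⁻¹)). Then: (i) if χ(0,x) = 1 for all x, then γ(0,x) = γ₀(x) for all x; and (ii) for all (t,x) and all w ∈ E, ∂_t(γ(t,x)(w)) + (d_xν(t,x))(w) + ⁅γ(t,x)(w), ν(t,x)⁆ = 0; that is, γ solves the affine advection equation γ̇ + d^γν = 0, where d^γν := dν + ad_γν and (ad_γν)(w) := ⁅γ(w), ν⁆. -/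

import Mathlib

open MeasureTheory

attribute [local instance] Matrix.normedAddCommGroup Matrix.normedSpace

/-!
Let `ω = dχ χ⁻¹` be the pull-back to `ℝ × E` of the right-invariant Maurer–Cartan form. Then
`ν = ω(∂_t)` and `γ(w) = Ad_χ (γ₀ w) - ω(w)`. Differentiating `Ad_χ` gives
`∂_t (Ad_χ (γ₀ w)) = ⁅ν, Ad_χ (γ₀ w)⁆`, and the Maurer–Cartan structure equation gives
`d_x ν(w) - ∂_t (ω(w)) = ⁅ω(w), ν⁆`. The sum of the two is `-⁅γ(w), ν⁆`.
-/

open scoped Ring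

section PartialDerivatives

variable {𝕜 E F G : Type*} [NontriviallyNormedField 𝕜]
  [NormedAddCommGroup E] [NormedSpace 𝕜 E] [NormedAddCommGroup F] [NormedSpace 𝕜 F]
  [NormedAddCommGroup G] [NormedSpace 𝕜 G]

theorem deriv_comp_prodMk_left {f : 𝕜 × E → G} {t : 𝕜} {x : E}
    (hf : DifferentiableAt 𝕜 f (t, x)) :
    deriv (fun s => f (s, x)) t = fderiv 𝕜 f (t, x) (1, 0) :=
  (hf.hasFDerivAt.comp_hasDerivAt t ((hasDerivAt_id t).prodMk (hasDerivAt_const t x))).deriv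

theorem fderiv_comp_prodMk_right_apply {f : E × F → G} {x : E} {y : F}
    (hf : DifferentiableAt 𝕜 f (x, y)) (w : F) :
    fderiv 𝕜 (fun z => f (x, z)) y w = fderiv 𝕜 f (x, y) (0, w) :=
  DFunLike.congr_fun (hf.hasFDerivAt.comp y (hasFDerivAt_prodMk_right x y)).fderiv w

theorem fderiv_fderiv_apply {f : E → G} {p : E} (hf : DifferentiableAt 𝕜 (fderiv 𝕜 f) p)
    (u v : E) : fderiv 𝕜 (fun q => fderiv 𝕜 f q v) p u = fderiv 𝕜 (fderiv 𝕜 f) p u v := by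
  simp [fderiv_clm_apply hf (differentiableAt_const v)]

end PartialDerivatives

section MaurerCartan

variable {𝕜 V A : Type*} [NontriviallyNormedField 𝕜] [NormedAddCommGroup V] [NormedSpace 𝕜 V]
  [NormedRing A] [NormedAlgebra 𝕜 A]

variable (𝕜) in
/-- The pull-back `dg g⁻¹` of the right-invariant Maurer–Cartan form along a map `g` into the
units of a normed algebra. The inverse is `Ring.inverse`, which is `0` at non-units. -/
noncomputable def rightMaurerCartan (g : V → A) (p : V) : V →L[𝕜] A :=
  (ContinuousLinearMap.mul 𝕜 A).flip (g p)⁻¹ʳ ∘L fderiv 𝕜 g p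

theorem rightMaurerCartan_apply (g : V → A) (p v : V) :
    rightMaurerCartan 𝕜 g p v = fderiv 𝕜 g p v * (g p)⁻¹ʳ :=
  rfl

variable [HasSummableGeomSeries A] {g : V → A} {p : V}

theorem differentiableAt_ringInverse_comp (hg : DifferentiableAt 𝕜 g p) (hu : IsUnit (g p)) :
    DifferentiableAt 𝕜 (fun q => (g q)⁻¹ʳ) p :=
  (differentiableAt_inverse hu).comp p hg

theorem fderiv_ringInverse_comp_apply (hg : DifferentiableAt 𝕜 g p) (hu : IsUnit (g p)) (v : V) :
    fderiv 𝕜 (fun q => (g q)⁻¹ʳ) p v = -((g p)⁻¹ʳ * rightMaurerCartan 𝕜 g p v) := by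
  obtain ⟨a, ha⟩ := hu
  have hinv : HasFDerivAt Ring.inverse _ (g p) := ha ▸ hasFDerivAt_ringInverse (𝕜 := 𝕜) a
  rw [HasFDerivAt.fderiv (f := fun q => (g q)⁻¹ʳ) (hinv.comp p hg.hasFDerivAt)]
  simp [rightMaurerCartan_apply, ← ha, mul_assoc]

theorem differentiableAt_conj (hg : DifferentiableAt 𝕜 g p) (hu : IsUnit (g p)) (a : A) :
    DifferentiableAt 𝕜 (fun q => g q * a * (g q)⁻¹ʳ) p :=
  (hg.mul_const a).mul (differentiableAt_ringInverse_comp hg hu)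

theorem fderiv_conj_apply (hg : DifferentiableAt 𝕜 g p) (hu : IsUnit (g p)) (a : A) (v : V) :
    fderiv 𝕜 (fun q => g q * a * (g q)⁻¹ʳ) p v =
      ⁅rightMaurerCartan 𝕜 g p v, g p * a * (g p)⁻¹ʳ⁆ := by
  rw [fderiv_fun_mul' (hg.mul_const a) (differentiableAt_ringInverse_comp hg hu),
    fderiv_mul_const' hg]
  simp only [add_apply, smul_apply, smul_eq_mul,
    MulOpposite.smul_eq_mul_unop, MulOpposite.unop_op, fderiv_ringInverse_comp_apply hg hu,
    rightMaurerCartan_apply, Ring.lie_def, mul_assoc, Ring.inverse_mul_cancel_left _ _ hu]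
  noncomm_ring

theorem differentiableAt_rightMaurerCartan_apply (hg : DifferentiableAt 𝕜 g p)
    (hg' : DifferentiableAt 𝕜 (fderiv 𝕜 g) p) (hu : IsUnit (g p)) (v : V) :
    DifferentiableAt 𝕜 (fun q => rightMaurerCartan 𝕜 g q v) p :=
  (hg'.clm_apply (differentiableAt_const v)).mul (differentiableAt_ringInverse_comp hg hu)

theorem fderiv_rightMaurerCartan_apply (hg : DifferentiableAt 𝕜 g p)
    (hg' : DifferentiableAt 𝕜 (fderiv 𝕜 g) p) (hu : IsUnit (g p)) (u v : V) :
    fderiv 𝕜 (fun q => rightMaurerCartan 𝕜 g q v) p u =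
      fderiv 𝕜 (fderiv 𝕜 g) p u v * (g p)⁻¹ʳ
        - rightMaurerCartan 𝕜 g p v * rightMaurerCartan 𝕜 g p u := by
  simp only [rightMaurerCartan_apply g _ v]
  rw [fderiv_fun_mul' (hg'.clm_apply (differentiableAt_const v))
    (differentiableAt_ringInverse_comp hg hu)]
  simp only [add_apply, smul_apply, smul_eq_mul,
    MulOpposite.smul_eq_mul_unop, MulOpposite.unop_op, fderiv_ringInverse_comp_apply hg hu,
    fderiv_fderiv_apply hg']
  noncomm_ring

theorem rightMaurerCartan_structure_equation (hg : DifferentiableAt 𝕜 g p)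
    (hg' : DifferentiableAt 𝕜 (fderiv 𝕜 g) p) (hsymm : IsSymmSndFDerivAt 𝕜 g p)
    (hu : IsUnit (g p)) (u v : V) :
    fderiv 𝕜 (fun q => rightMaurerCartan 𝕜 g q v) p u
        - fderiv 𝕜 (fun q => rightMaurerCartan 𝕜 g q u) p v =
      ⁅rightMaurerCartan 𝕜 g p u, rightMaurerCartan 𝕜 g p v⁆ := by
  rw [fderiv_rightMaurerCartan_apply hg hg' hu, fderiv_rightMaurerCartan_apply hg hg' hu,
    hsymm.eq u v, Ring.lie_def]
  abel

theorem affine_advection_conj_sub_rightMaurerCartan (hg : DifferentiableAt 𝕜 g p)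
    (hg' : DifferentiableAt 𝕜 (fderiv 𝕜 g) p) (hsymm : IsSymmSndFDerivAt 𝕜 g p)
    (hu : IsUnit (g p)) (a : A) (u v : V) :
    fderiv 𝕜 (fun q => g q * a * (g q)⁻¹ʳ - rightMaurerCartan 𝕜 g q v) p u
        + fderiv 𝕜 (fun q => rightMaurerCartan 𝕜 g q u) p v
        + ⁅g p * a * (g p)⁻¹ʳ - rightMaurerCartan 𝕜 g p v, rightMaurerCartan 𝕜 g p u⁆ = 0 := by
  rw [fderiv_fun_sub (differentiableAt_conj hg hu a)
      (differentiableAt_rightMaurerCartan_apply hg hg' hu v),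
    sub_apply, fderiv_conj_apply hg hu, sub_add_eq_add_sub, add_sub_assoc,
    rightMaurerCartan_structure_equation hg hg' hsymm hu v u]
  simp only [Ring.lie_def, sub_mul, mul_sub]
  abel

end MaurerCartan

section LinftyOpNorm

variable {𝕜 E α m n : Type*} [Fintype m] [Fintype n]

-- The elementwise norm is not submultiplicative, but it induces definitionally the same topology
-- and uniformity as the `L∞` operator norm, for which square matrices form a normed ring.
theorem contDiff_linftyOp [NontriviallyNormedField 𝕜] [NormedAddCommGroup E] [NormedSpace 𝕜 E]
    [NormedAddCommGroup α] [NormedSpace 𝕜 α] {r : WithTop ℕ∞} {f : E → Matrix m n α}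
    (hf : ContDiff 𝕜 r f) :
    @ContDiff 𝕜 _ E _ _ (Matrix m n α) Matrix.linftyOpNormedAddCommGroup
      Matrix.linftyOpNormedSpace r f :=
  @ContDiff.continuousLinearMap_comp 𝕜 E _ _ _ _ _ _ _ Matrix.linftyOpNormedAddCommGroup
    Matrix.linftyOpNormedSpace r f (.id 𝕜 (Matrix m n α)) hf

theorem hasSummableGeomSeries_linftyOp [DecidableEq n] [NormedRing α] [CompleteSpace α] :
    @HasSummableGeomSeries (Matrix n n α) Matrix.linftyOpNormedRing :=
  @instHasSummableGeomSeriesOfCompleteSpace _ Matrix.linftyOpNormedRing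
    (inferInstanceAs (CompleteSpace (n → n → α)))

end LinftyOpNorm

theorem advected_connection_solves_affine_advection_general
    {𝕜 E A : Type*} [NontriviallyNormedField 𝕜] [NormedAddCommGroup E] [NormedSpace 𝕜 E]
    [NormedRing A] [NormedAlgebra 𝕜 A] [HasSummableGeomSeries A]
    {r : WithTop ℕ∞} (hr : minSmoothness 𝕜 2 ≤ r)
    {χ : 𝕜 × E → A} (hχ : ContDiff 𝕜 r χ) (hinv : ∀ p, IsUnit (χ p))
    {γ₀ : E → E → A} {ν : 𝕜 → E → A}
    (hν : ∀ t x, ν t x = deriv (fun s => χ (s, x)) t * (χ (t, x))⁻¹ʳ)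
    {γ : 𝕜 → E → E → A}
    (hγ : ∀ t x w, γ t x w =
      χ (t, x) * γ₀ x w * (χ (t, x))⁻¹ʳ - fderiv 𝕜 (fun y => χ (t, y)) x w * (χ (t, x))⁻¹ʳ) :
    ((∀ x, χ (0, x) = 1) → ∀ x w, γ 0 x w = γ₀ x w)
    ∧ (∀ t x w,
        deriv (fun s => γ s x w) t + fderiv 𝕜 (fun y => ν t y) x w + ⁅γ t x w, ν t x⁆ = 0) := by
  refine ⟨fun h₀ x w => by simp [hγ, h₀], fun t x w => ?_⟩
  have hχ₂ : ContDiff 𝕜 2 χ := hχ.of_le (le_minSmoothness.trans hr)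
  have hd : Differentiable 𝕜 χ := hχ₂.differentiable two_ne_zero
  have hd' : Differentiable 𝕜 (fderiv 𝕜 χ) :=
    (hχ₂.fderiv_right (m := 1) one_add_one_eq_two.le).differentiable one_ne_zero
  have hω (v : 𝕜 × E) : DifferentiableAt 𝕜 (fun q => rightMaurerCartan 𝕜 χ q v) (t, x) :=
    differentiableAt_rightMaurerCartan_apply (hd _) (hd' _) (hinv _) v
  have hν_eq (y : E) : ν t y = rightMaurerCartan 𝕜 χ (t, y) (1, 0) := by
    rw [hν, deriv_comp_prodMk_left (hd _), ← rightMaurerCartan_apply]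
  have hγ_eq (s : 𝕜) : γ s x w =
      χ (s, x) * γ₀ x w * (χ (s, x))⁻¹ʳ - rightMaurerCartan 𝕜 χ (s, x) (0, w) := by
    rw [hγ, fderiv_comp_prodMk_right_apply (hd _), ← rightMaurerCartan_apply]
  simp only [hγ_eq, hν_eq]
  rw [fderiv_comp_prodMk_right_apply (hω _),
    deriv_comp_prodMk_left ((differentiableAt_conj (hd _) (hinv _) (γ₀ x w)).fun_sub (hω _))]
  exact affine_advection_conj_sub_rightMaurerCartan (hd _) (hd' _)
    (hχ.contDiffAt.isSymmSndFDerivAt hr) (hinv _) _ _ _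

/-- For a curve `χ(t)` with `ν = χ̇χ⁻¹`, the one-form
`γ(t) = θ_{χ(t)⁻¹}(γ₀) = χγ₀χ⁻¹ + χ d(χ⁻¹)` has initial value `γ₀` (when `χ(0) = 1`)
and solves the affine advection equation `γ̇ + d^γν = 0`, i.e.
`∂_t(γ(t,x)(w)) + (d_xν(t,x))(w) + ⁅γ(t,x)(w), ν(t,x)⁆ = 0`. -/
theorem advected_connection_solves_affine_advection
    {n : ℕ} (hn : 1 ≤ n)
    {E : Type*} [NormedAddCommGroup E] [NormedSpace ℝ E]
    (χ : ℝ × E → Matrix (Fin n) (Fin n) ℝ)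
    (hχ : ContDiff ℝ 2 χ)
    (hinv : ∀ p : ℝ × E, IsUnit (χ p))
    (γ₀ : E → (E →L[ℝ] Matrix (Fin n) (Fin n) ℝ))
    (ν : ℝ → E → Matrix (Fin n) (Fin n) ℝ)
    (hν : ∀ t x, ν t x = deriv (fun s => χ (s, x)) t * (χ (t, x))⁻¹)
    (γ : ℝ → E → E → Matrix (Fin n) (Fin n) ℝ)
    (hγ : ∀ t x w, γ t x w =
      χ (t, x) * (γ₀ x w) * (χ (t, x))⁻¹
        - (fderiv ℝ (fun y => χ (t, y)) x w) * (χ (t, x))⁻¹) :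
    ((∀ x, χ (0, x) = 1) → ∀ x w, γ 0 x w = γ₀ x w)
    ∧ (∀ t x w,
        deriv (fun s => γ s x w) t + fderiv ℝ (fun y => ν t y) x w
          + ⁅γ t x w, ν t x⁆ = 0) := by
  let _ : NormedRing (Matrix (Fin n) (Fin n) ℝ) := Matrix.linftyOpNormedRing
  let _ : NormedAlgebra ℝ (Matrix (Fin n) (Fin n) ℝ) := Matrix.linftyOpNormedAlgebra
  have : HasSummableGeomSeries (Matrix (Fin n) (Fin n) ℝ) := hasSummableGeomSeries_linftyOp
  simp only [Matrix.nonsing_inv_eq_ringInverse] at hν hγ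
  exact advected_connection_solves_affine_advection_general
    minSmoothness_of_isRCLikeNormedField.le (contDiff_linftyOp hχ) hinv hν hγ
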